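/- arXiv:2308.04191 — 2 statements merged into one kernel-verified Lean document; each statement's English description precedes it below -/
import Mathlib

section
/- Let A ⊆ ℝ∖{0} be a finite set with |A| ≥ 2 satisfying |A·A| ≤ K|A| for some real K ≥ 1, and suppose that the multiplicative subgroup of ℝ∖{0} generated by A is a free abelian group of rank r (i.e., isomorphic to ℤʳ) for some natural number r ≥ 1. Then r ≤ 2K. -/
open Pointwise

/-!
Since ℤʳ carries a translation-invariant linear order, `A` may be replaced by a generating set of
an ordered abelian group. Freiman's lemma `d * |A| ≤ |A + A| + d.choose 2`, where `d` is the rank of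
the span of `A`, follows by inserting the elements in increasing order. If `v` lies above every
element of `A`, the sums gained from `v` are the `v + b` lying outside `A + A`; any other
`x` in `insert v A` has `v + x = c + d` with `x < c` and `x < d`, so descending from `v` shows that
the gaining `b` already span. At least `d` sums are therefore gained, and all `|A| + 1` of them when
`v` raises the rank. Finally `d ≤ |A|` gives `d * |A| ≤ 2 * |A + A|`.
-/

open Finset Module Submodule

universe u

section NewSummands

variable {V : Type u} [DecidableEq V]

/-- The elements `b` of `insert v A` for which `v + b` is a sum not yet in `A + A`: they count the
growth of the sumset `A + A` when `v` is adjoined to `A`. -/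
def newSummands [Add V] (v : V) (A : Finset V) : Finset V :=
  {b ∈ insert v A | v + b ∉ A + A}

theorem insert_add_insert_eq_union [AddCommSemigroup V] (v : V) (A : Finset V) :
    insert v A + insert v A = (A + A) ∪ (newSummands v A).image (v + ·) := by
  ext x
  simp only [newSummands, mem_union, mem_image, mem_filter, mem_add, mem_insert]
  grind [add_comm]

theorem card_insert_add_insert [AddCommSemigroup V] [IsLeftCancelAdd V] (v : V) (A : Finset V) :
    #(insert v A + insert v A) = #(A + A) + #(newSummands v A) := by
  have hdisj : Disjoint (A + A) ((newSummands v A).image (v + ·)) := by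
    simp only [disjoint_right, mem_image, newSummands, mem_filter]
    rintro _ ⟨b, ⟨-, hb⟩, rfl⟩
    exact hb
  rw [insert_add_insert_eq_union, card_union_of_disjoint hdisj,
    card_image_of_injective _ (add_right_injective v)]

variable [AddCommGroup V] [PartialOrder V] [IsOrderedAddMonoid V] {v : V} {A : Finset V}

theorem self_mem_newSummands (hv : ∀ a ∈ A, a < v) : v ∈ newSummands v A := by
  simp only [newSummands, mem_filter, mem_insert_self, true_and, mem_add, not_exists, not_and]
  exact fun c hc d hd => (add_lt_add (hv c hc) (hv d hd)).ne

variable {R : Type*} [Ring R] [Module R V]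

theorem newSummands_eq_insert_of_notMem_span (hv : ∀ a ∈ A, a < v)
    (hspan : v ∉ span R (A : Set V)) : newSummands v A = insert v A := by
  refine (filter_subset _ _).antisymm (insert_subset (self_mem_newSummands hv) fun b hb => ?_)
  refine mem_filter.2 ⟨mem_insert_of_mem hb, fun hvb => hspan ?_⟩
  obtain ⟨c, hc, d, hd, hcd⟩ := mem_add.1 hvb
  rw [eq_sub_of_add_eq hcd.symm]
  exact sub_mem (add_mem (subset_span hc) (subset_span hd)) (subset_span hb)

theorem insert_subset_span_newSummands (hv : ∀ a ∈ A, a < v) :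
    ((insert v A : Finset V) : Set V) ⊆ span R (newSummands v A : Set V) := by
  intro x hx
  refine ((insert v A).finite_toSet.wellFoundedOn (r := (· > ·))).induction hx fun x hx ih => ?_
  by_cases hnew : v + x ∈ A + A
  · obtain ⟨c, hc, d, hd, hcd⟩ := mem_add.1 hnew
    have hxc : x < c := lt_of_add_lt_add_left <| calc
      v + x = d + c := by rw [← hcd, add_comm]
      _ < v + c := by gcongr; exact hv d hd
    have hxd : x < d := lt_of_add_lt_add_left <| calc
      v + x = c + d := hcd.symm
      _ < v + d := by gcongr; exact hv c hc
    rw [eq_sub_of_add_eq' hcd.symm]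
    exact sub_mem (add_mem (ih c (mem_insert_of_mem hc) hxc) (ih d (mem_insert_of_mem hd) hxd))
      (subset_span (self_mem_newSummands hv))
  · exact subset_span (mem_filter.2 ⟨hx, hnew⟩)

theorem finrank_insert_le_card_newSummands [StrongRankCondition R] (hv : ∀ a ∈ A, a < v) :
    Set.finrank R ((insert v A : Finset V) : Set V) ≤ #(newSummands v A) :=
  (finrank_mono (span_le.2 (insert_subset_span_newSummands hv))).trans
    (finrank_span_finset_le_card _)

end NewSummands

section Freiman

variable {R : Type*} {V : Type u} [Ring R] [StrongRankCondition R] [HasRankNullity.{u} R]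
  [AddCommGroup V] [Module R V] [DecidableEq V]

theorem finrank_insert_le_finrank_add_one (v : V) (A : Finset V) :
    Set.finrank R ((insert v A : Finset V) : Set V) ≤ Set.finrank R (A : Set V) + 1 := by
  have hrank : Module.rank R (span R ((insert v A : Finset V) : Set V)) ≤
      Module.rank R (span R (A : Set V)) + 1 := by
    rw [coe_insert, span_insert, add_comm]
    refine (rank_add_le_rank_add_rank _ _).trans ?_
    gcongr
    simpa using rank_span_le (R := R) ({v} : Set V)
  rw [← finrank_eq_rank, ← finrank_eq_rank] at hrank
  exact_mod_cast hrank

variable [LinearOrder V] [IsOrderedAddMonoid V]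

variable (R) in
theorem finrank_mul_card_le_card_add_self_add_choose (A : Finset V) :
    Set.finrank R (A : Set V) * #A ≤ #(A + A) + (Set.finrank R (A : Set V)).choose 2 := by
  induction A using induction_on_max with
  | empty => simp
  | insert v A hv ih =>
    have hvA : v ∉ A := fun h => lt_irrefl v (hv v h)
    have hmono : Set.finrank R (A : Set V) ≤ Set.finrank R ((insert v A : Finset V) : Set V) :=
      finrank_mono (span_mono (by simp))
    rw [card_insert_add_insert, card_insert_of_notMem hvA]
    rcases hmono.eq_or_lt with heq | hlt
    · have hnew := finrank_insert_le_card_newSummands (R := R) hv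
      rw [← heq] at hnew ⊢
      linarith
    · have hspan : v ∉ span R (A : Set V) := fun h => hlt.ne <| by
        rw [Set.finrank, Set.finrank, coe_insert, span_insert_eq_span h]
      rw [newSummands_eq_insert_of_notMem_span hv hspan, card_insert_of_notMem hvA,
        (finrank_insert_le_finrank_add_one v A).antisymm hlt, Nat.choose_succ_succ',
        Nat.choose_one_right]
      linarith

variable (R) in
theorem finrank_mul_card_le_two_mul_card_add_self (A : Finset V) :
    Set.finrank R (A : Set V) * #A ≤ 2 * #(A + A) := by
  set d := Set.finrank R (A : Set V)
  have hchoose : 2 * d.choose 2 ≤ d * #A := calc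
    2 * d.choose 2 ≤ d * (d - 1) := by rw [Nat.choose_two_right]; exact Nat.mul_div_le _ _
    _ ≤ d * #A := by gcongr; exact (d.sub_le 1).trans (finrank_span_finset_le_card A)
  linarith [finrank_mul_card_le_card_add_self_add_choose R A]

end Freiman

section Transport

variable {M V : Type*} [Monoid M] [AddCommGroup V] [DecidableEq M] [DecidableEq V] {A : Finset M}

theorem exists_finset_span_int_eq_top_of_mulEquiv (hA : ∀ a ∈ A, IsUnit a)
    (e : Subgroup.closure {u : Mˣ | (u : M) ∈ A} ≃* Multiplicative V) :
    ∃ B : Finset V, span ℤ (B : Set V) = ⊤ ∧ #B = #A ∧ #(B + B) = #(A * A) := by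
  let f : V → M := fun x => (e.symm (.ofAdd x) : Mˣ)
  have hf : f.Injective := Units.val_injective.comp <| Subtype.val_injective.comp <|
    e.symm.injective.comp Multiplicative.ofAdd.injective
  have hrange : (A : Set M) ⊆ Set.range f := fun a ha => by
    obtain ⟨u, rfl⟩ := hA a ha
    exact ⟨(e ⟨u, Subgroup.subset_closure ha⟩).toAdd, by simp [f]⟩
  obtain ⟨B, -, hB⟩ := subset_set_image_iff.1 (hrange.trans_eq Set.image_univ.symm)
  refine ⟨B, ?_, ?_, ?_⟩
  · let N : Subgroup (Multiplicative V) := (span ℤ (B : Set V)).toAddSubgroup.toSubgroup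
    have hgen : ⊤ ≤ N.comap e.toMonoidHom := by
      rw [← Subgroup.closure_closure_coe_preimage, Subgroup.closure_le]
      intro h hh
      refine subset_span (hf.mem_finset_image.1 ?_)
      rw [hB]
      simpa [f] using hh
    refine eq_top_iff.2 fun x _ => ?_
    simpa [N] using hgen (Subgroup.mem_top (e.symm (.ofAdd x)))
  · rw [← hB, card_image_of_injective _ hf]
  · have hmul : (B + B).image f = A * A := by
      rw [← hB]
      exact image_image₂_distrib fun x y => by simp [f]
    rw [← hmul, card_image_of_injective _ hf]

end Transport

theorem stmt9_general {M : Type*} [Monoid M] [DecidableEq M] (A : Finset M)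
    (hunit : ∀ a ∈ A, IsUnit a) (hne : A.Nonempty)
    (K : ℝ) (hAA : ((A * A).card : ℝ) ≤ K * (A.card : ℝ)) (r : ℕ)
    (hfree : Nonempty
      ((Subgroup.closure {u : Mˣ | (u : M) ∈ A}) ≃* Multiplicative (Fin r → ℤ))) :
    (r : ℝ) ≤ 2 * K := by
  obtain ⟨e⟩ := hfree
  obtain ⟨B, hspan, hB, hBB⟩ := exists_finset_span_int_eq_top_of_mulEquiv hunit
    (e.trans (toLexAddEquiv (Fin r → ℤ)).toMultiplicative)
  have hrank : Set.finrank ℤ (B : Set (Lex (Fin r → ℤ))) = r := by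
    rw [Set.finrank, hspan, finrank_top]
    exact (toLexLinearEquiv ℤ (Fin r → ℤ)).finrank_eq.symm.trans (finrank_fin_fun ℤ)
  have hcard : (r : ℝ) * #A ≤ 2 * #(A * A) := by
    have hfreiman := finrank_mul_card_le_two_mul_card_add_self ℤ B
    rw [hrank, hB, hBB] at hfreiman
    exact_mod_cast hfreiman
  refine le_of_mul_le_mul_right ?_ (Nat.cast_pos.2 hne.card_pos : (0 : ℝ) < #A)
  linarith

theorem stmt9 (A : Finset ℝ) (h0 : (0 : ℝ) ∉ A) (h2 : 2 ≤ A.card)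
    (K : ℝ) (hK : 1 ≤ K) (hAA : ((A * A).card : ℝ) ≤ K * (A.card : ℝ))
    (r : ℕ) (hr : 1 ≤ r)
    (hfree : Nonempty
      ((Subgroup.closure {u : ℝˣ | (u : ℝ) ∈ A}) ≃* Multiplicative (Fin r → ℤ))) :
    (r : ℝ) ≤ 2 * K :=
  stmt9_general A (fun _ ha => (ne_of_mem_of_not_mem ha h0).isUnit)
    (card_pos.1 (two_pos.trans_le h2)) K hAA r hfree
end

section
/- Let A ⊆ ℂ∖{0} be a finite set with 1 ∈ A satisfying |A·A| ≤ K|A| for some real K ≥ 1. Then the multiplicative subgroup of ℂ∖{0} generated by A has rank at most 16K, i.e., there exist g₁,…,g_s in this subgroup with s ≤ 16K such that every element x of the subgroup has some positive power x^k lying in the subgroup generated by g₁,…,g_s. -/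
open Pointwise

/-!
Tensoring with `ℚ` kills exactly the torsion of the unit group, so the rank in question is the
dimension of the span of the image of `A` in a rational vector space, at most one more than the
dimension `d` of the affine span of that image. A Freiman-type inequality bounds `d` by
`(d + 2) |A| ≤ 2 |A * A|`, even though the map to the vector space need not be injective on `A`.

To prove the inequality, order the vector space linearly and induct on `A`, removing the fibre `F`
over the least value `m`. If `C` is what remains, then `F * A` contains at least `(d + 1) |F|`
products outside `C * C`: translating `m` to `0`, the values that are not a sum of two positive
ones generate all the others, so besides `0` there are at least `d` of them. This is enough when
removing `F` preserves the affine span. Otherwise `d` drops by one, and `F * A`, which has at least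
`|A|` elements, is disjoint from `C * C`.
-/

theorem subset_addSubmonoidClosure_of_decomposable {M : Type*} [AddMonoid M] [Preorder M]
    [AddLeftStrictMono M] [AddRightStrictMono M] {B I : Set M} (hB : B.IsWF)
    (hI : ∀ v ∈ B, v ∉ I → ∃ u ∈ B, ∃ w ∈ B, 0 < u ∧ 0 < w ∧ u + w = v) :
    B ⊆ AddSubmonoid.closure I := by
  intro v hv
  refine Set.WellFoundedOn.induction hB hv fun v hv ih ↦ ?_
  by_cases hvI : v ∈ I
  · exact AddSubmonoid.subset_closure hvI
  · obtain ⟨u, hu, w, hw, hu0, hw0, rfl⟩ := hI v hv hvI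
    exact add_mem (ih u hu (lt_add_of_pos_right u hw0)) (ih w hw (lt_add_of_pos_left w hu0))

section OrderedVectorSpace

variable {k V : Type*} [DivisionRing k] [AddCommGroup V] [Module k V] [LinearOrder V]
  [IsOrderedAddMonoid V]

theorem finrank_span_add_one_le_card_sdiff {B : Finset V} (hB : IsLeast (B : Set V) 0) :
    Module.finrank k (Submodule.span k (B : Set V)) + 1 ≤
      (B \ (B.erase 0 + B.erase 0)).card := by
  set I := B \ (B.erase 0 + B.erase 0)
  have hpos : ∀ u ∈ B.erase 0, 0 < u := fun u hu ↦
    (hB.2 (Finset.mem_of_mem_erase hu)).lt_of_ne (Finset.ne_of_mem_erase hu).symm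
  have h0I : 0 ∈ I := by
    refine Finset.mem_sdiff.2 ⟨hB.1, fun h ↦ ?_⟩
    obtain ⟨u, hu, w, hw, huw⟩ := Finset.mem_add.1 h
    exact (add_pos (hpos u hu) (hpos w hw)).ne' huw
  have hgen : (B : Set V) ⊆ AddSubmonoid.closure (I : Set V) := by
    refine subset_addSubmonoidClosure_of_decomposable B.finite_toSet.isWF fun v hv hvI ↦ ?_
    have hdec : v ∈ B.erase 0 + B.erase 0 := by
      by_contra h
      exact hvI (Finset.mem_sdiff.2 ⟨hv, h⟩)
    obtain ⟨u, hu, w, hw, huw⟩ := Finset.mem_add.1 hdec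
    exact ⟨u, Finset.mem_of_mem_erase hu, w, Finset.mem_of_mem_erase hw, hpos u hu, hpos w hw, huw⟩
  have hspan : Submodule.span k (B : Set V) ≤ Submodule.span k (I.erase 0 : Set V) := by
    rw [Submodule.span_le, ← Submodule.span_insert_zero, ← Finset.coe_insert,
      Finset.insert_erase h0I]
    exact hgen.trans Submodule.closure_subset_span
  calc Module.finrank k (Submodule.span k (B : Set V)) + 1
      ≤ Module.finrank k (Submodule.span k (I.erase 0 : Set V)) + 1 := by
        gcongr
        exact Submodule.finrank_mono hspan
    _ ≤ (I.erase 0).card + 1 := by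
        gcongr
        exact finrank_span_finset_le_card _
    _ = I.card := Finset.card_erase_add_one h0I

theorem finrank_vectorSpan_add_one_le_card_sdiff {B : Finset V} {m : V}
    (hm : IsLeast (B : Set V) m) :
    Module.finrank k (vectorSpan k (B : Set V)) + 1 ≤
      ((m +ᵥ B) \ (B.erase m + B.erase m)).card := by
  obtain ⟨C, rfl⟩ : ∃ C, B = m +ᵥ C := ⟨-m +ᵥ B, (vadd_neg_vadd m B).symm⟩
  have hC : IsLeast (C : Set V) 0 := by
    simpa [IsLeast, lowerBounds, Set.mem_vadd_set] using hm
  have hspan : vectorSpan k ((m +ᵥ C : Finset V) : Set V) = Submodule.span k (C : Set V) := by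
    rw [vectorSpan_eq_span_vsub_set_right k hm.1, Finset.coe_vadd_finset, ← Set.image_vadd,
      Set.image_image]
    simp
  have herase : (m +ᵥ C).erase m = m +ᵥ C.erase 0 := by
    rw [Finset.erase_eq, Finset.erase_eq, Finset.vadd_finset_sdiff, Finset.vadd_finset_singleton,
      vadd_eq_add, add_zero]
  rw [hspan, herase, vadd_add_assoc, add_vadd_comm, ← Finset.vadd_finset_sdiff,
    ← Finset.vadd_finset_sdiff, Finset.card_vadd_finset, Finset.card_vadd_finset]
  exact finrank_span_add_one_le_card_sdiff hC

theorem disjoint_vadd_erase_add_erase {B : Finset V} {m : V} (hm : IsLeast (B : Set V) m)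
    (hmB : m ∉ affineSpan k (B.erase m : Set V)) :
    Disjoint (m +ᵥ B) (B.erase m + B.erase m) := by
  rw [Finset.disjoint_left]
  intro _ hv hdec
  obtain ⟨v, hvB, rfl⟩ := Finset.mem_vadd_finset.1 hv
  obtain ⟨u, hu, w, hw, huw⟩ := Finset.mem_add.1 hdec
  rw [vadd_eq_add] at huw
  have hlt : ∀ u ∈ B.erase m, m < u := fun u hu ↦
    (hm.2 (Finset.mem_of_mem_erase hu)).lt_of_ne (Finset.ne_of_mem_erase hu).symm
  rcases eq_or_ne v m with rfl | hvm
  · exact (add_lt_add (hlt u hu) (hlt w hw)).ne' huw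
  · have hmem : (1 : k) • (u -ᵥ v) +ᵥ w ∈ affineSpan k (B.erase m : Set V) :=
      AffineSubspace.smul_vsub_vadd_mem _ 1 (mem_affineSpan k hu)
        (mem_affineSpan k (Finset.mem_erase.2 ⟨hvm, hvB⟩)) (mem_affineSpan k hw)
    rw [one_smul, vsub_eq_sub, vadd_eq_add, sub_add_eq_add_sub, huw, add_sub_cancel_right] at hmem
    exact hmB hmem

end OrderedVectorSpace

theorem card_mul_card_vadd_image_sdiff_le {G V : Type*} [Mul G]
    [IsRightCancelMul G] [DecidableEq G] [Add V] [DecidableEq V]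
    {p : G → V} (hp : ∀ a b, p (a * b) = p a + p b) {m : V}
    {F : Finset G} (hF : ∀ a ∈ F, p a = m) (A D : Finset G) :
    F.card * ((m +ᵥ A.image p) \ D.image p).card ≤ ((F * A) \ D).card := by
  set T := (m +ᵥ A.image p) \ D.image p
  calc F.card * T.card
      ≤ {y ∈ (F * A) \ D | p y ∈ T}.card := by
        refine Finset.mul_card_image_le_card_of_maps_to
          (fun y hy ↦ (Finset.mem_filter.1 hy).2) _ fun t ht ↦ ?_
        obtain ⟨htA, htD⟩ := Finset.mem_sdiff.1 ht
        obtain ⟨_, hv, hmv⟩ := Finset.mem_vadd_finset.1 htA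
        obtain ⟨a, ha, rfl⟩ := Finset.mem_image.1 hv
        have hpa : ∀ b ∈ F, p (b * a) = t := fun b hb ↦ by rw [hp, hF b hb, ← hmv, vadd_eq_add]
        refine Finset.card_le_card_of_injOn (· * a) (fun b hb ↦ ?_) (mul_left_injective a).injOn
        have hbD : b * a ∉ D := fun h ↦ htD (Finset.mem_image.2 ⟨_, h, hpa b hb⟩)
        simp only [Finset.coe_filter, Finset.mem_filter, Finset.mem_sdiff, Set.mem_ofPred_eq]
        exact ⟨⟨⟨Finset.mul_mem_mul hb ha, hbD⟩, (hpa b hb).symm ▸ ht⟩, hpa b hb⟩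
    _ ≤ ((F * A) \ D).card := Finset.card_filter_le _ _

theorem image_filter_ne {α β : Type*} [DecidableEq β] (f : α → β) (A : Finset α) (b : β) :
    {a ∈ A | f a ≠ b}.image f = (A.image f).erase b := by
  rw [← Finset.filter_ne', Finset.filter_image]

section FibreProducts

variable {G V : Type*} [Mul G] [DecidableEq G]

/-- The products that have a factor in the fibre of `p` over `m` and cannot be rewritten with both
factors outside that fibre: removing the fibre from `A` removes all of them from `A * A`. -/
def fibreProducts [DecidableEq V] (p : G → V) (A : Finset G) (m : V) : Finset G :=
  ({a ∈ A | p a = m} * A) \ ({a ∈ A | p a ≠ m} * {a ∈ A | p a ≠ m})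

theorem card_fibreProducts_add_card_mul_le [DecidableEq V] (p : G → V) (A : Finset G) (m : V) :
    (fibreProducts p A m).card + ({a ∈ A | p a ≠ m} * {a ∈ A | p a ≠ m}).card ≤ (A * A).card := by
  rw [fibreProducts, ← Finset.card_union_of_disjoint Finset.sdiff_disjoint]
  exact Finset.card_le_card <| Finset.union_subset
    (Finset.sdiff_subset.trans (Finset.mul_subset_mul_right (Finset.filter_subset _ _)))
    (Finset.mul_subset_mul (Finset.filter_subset _ _) (Finset.filter_subset _ _))

theorem image_filter_ne_mul_filter_ne [Add V] [DecidableEq V] {p : G → V}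
    (hp : ∀ a b, p (a * b) = p a + p b) (A : Finset G) (m : V) :
    ({a ∈ A | p a ≠ m} * {a ∈ A | p a ≠ m}).image p =
      (A.image p).erase m + (A.image p).erase m := by
  rw [← image_filter_ne]
  exact Finset.image_image₂_distrib hp

variable {k : Type*} [DivisionRing k] [AddCommGroup V] [Module k V] [LinearOrder V]
  [IsOrderedAddMonoid V] {p : G → V} {A : Finset G} {m : V}

theorem card_fibre_mul_finrank_add_one_le_card_fibreProducts [IsRightCancelMul G]
    (hp : ∀ a b, p (a * b) = p a + p b) (hm : IsLeast (A.image p : Set V) m) :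
    {a ∈ A | p a = m}.card * (Module.finrank k (vectorSpan k (p '' A)) + 1) ≤
      (fibreProducts p A m).card := by
  refine le_trans ?_ <|
    card_mul_card_vadd_image_sdiff_le hp (fun a ha ↦ (Finset.mem_filter.1 ha).2) A _
  rw [image_filter_ne_mul_filter_ne hp, ← Finset.coe_image]
  gcongr
  exact finrank_vectorSpan_add_one_le_card_sdiff hm

theorem card_le_card_fibreProducts [IsLeftCancelMul G]
    (hp : ∀ a b, p (a * b) = p a + p b) (hm : IsLeast (A.image p : Set V) m)
    (hmA : m ∉ affineSpan k ((A.image p).erase m : Set V)) :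
    A.card ≤ (fibreProducts p A m).card := by
  have hdisj : Disjoint ({a ∈ A | p a = m} * A)
      ({a ∈ A | p a ≠ m} * {a ∈ A | p a ≠ m}) := by
    refine Disjoint.of_image_finset (f := p) ?_
    rw [image_filter_ne_mul_filter_ne hp]
    refine (disjoint_vadd_erase_add_erase hm hmA).mono_left fun _ hv ↦ ?_
    obtain ⟨_, hab, rfl⟩ := Finset.mem_image.1 hv
    obtain ⟨a, ha, b, hb, rfl⟩ := Finset.mem_mul.1 hab
    rw [hp, (Finset.mem_filter.1 ha).2, ← vadd_eq_add]
    exact Finset.vadd_mem_vadd_finset (Finset.mem_image_of_mem p hb)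
  obtain ⟨x, hx, hpx⟩ := Finset.mem_image.1 hm.1
  rw [fibreProducts, Finset.sdiff_eq_self_of_disjoint hdisj]
  exact Finset.card_le_card_mul_left ⟨x, Finset.mem_filter.2 ⟨hx, hpx⟩⟩

theorem finrank_vectorSpan_add_two_mul_card_le_of_linearOrder [IsCancelMul G]
    (hp : ∀ a b, p (a * b) = p a + p b) (A : Finset G) :
    (Module.finrank k (vectorSpan k (p '' A)) + 2) * A.card ≤ 2 * (A * A).card := by
  induction A using Finset.strongInduction with
  | H A ih =>
  rcases A.eq_empty_or_nonempty with rfl | hA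
  · simp
  obtain ⟨x, hx, hxmin⟩ := A.exists_min_image p hA
  set m := p x
  have hm : IsLeast (A.image p : Set V) m := by
    simpa [IsLeast, lowerBounds] using ⟨⟨x, hx, rfl⟩, hxmin⟩
  have hcard : {a ∈ A | p a = m}.card + {a ∈ A | p a ≠ m}.card = A.card :=
    Finset.card_filter_add_card_filter_not _
  have hrest := ih {a ∈ A | p a ≠ m} (Finset.filter_ssubset.2 ⟨x, hx, not_not.2 rfl⟩)
  rw [← Finset.coe_image, image_filter_ne] at hrest
  have hsplit := card_fibreProducts_add_card_mul_le p A m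
  have hfibre := card_fibre_mul_finrank_add_one_le_card_fibreProducts (k := k) hp hm
  have hinsert : p '' A = insert m ((A.image p).erase m : Set V) := by
    rw [← Finset.coe_insert, Finset.insert_erase hm.1, Finset.coe_image]
  by_cases hmA : m ∈ affineSpan k ((A.image p).erase m : Set V)
  · rw [← vectorSpan_insert_eq_vectorSpan hmA, ← hinsert] at hrest
    set d := Module.finrank k (vectorSpan k (p '' A))
    set F : Finset G := {a ∈ A | p a = m}
    set C : Finset G := {a ∈ A | p a ≠ m}
    calc (d + 2) * A.card
        ≤ 2 * (F.card * (d + 1)) + (d + 2) * C.card := by rw [← hcard]; nlinarith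
      _ ≤ 2 * (fibreProducts p A m).card + 2 * (C * C).card := by gcongr
      _ ≤ 2 * (A * A).card := by linarith
  · have hfull := card_le_card_fibreProducts hp hm hmA
    have hdim := finrank_vectorSpan_insert_le_set k ((A.image p).erase m : Set V) m
    rw [← hinsert] at hdim
    set d := Module.finrank k (vectorSpan k (p '' A))
    set d' := Module.finrank k (vectorSpan k ((A.image p).erase m : Set V))
    set F : Finset G := {a ∈ A | p a = m}
    set C : Finset G := {a ∈ A | p a ≠ m}
    calc (d + 2) * A.card
        = F.card * (d + 1) + (F.card + C.card) + (d + 1) * C.card := by rw [← hcard]; ring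
      _ ≤ F.card * (d + 1) + A.card + (d' + 2) * C.card := by
        rw [hcard]
        gcongr _ + _ + ?_ * _
        exact Nat.succ_le_succ hdim
      _ ≤ (fibreProducts p A m).card + (fibreProducts p A m).card + 2 * (C * C).card := by gcongr
      _ ≤ 2 * (A * A).card := by linarith

end FibreProducts

theorem exists_linearOrder_isOrderedAddMonoid (V : Type*) [AddCommGroup V] [Module ℚ V] :
    ∃ _ : LinearOrder V, IsOrderedAddMonoid V := by
  classical
  let b := Module.Basis.ofVectorSpace ℚ V
  let _ : LinearOrder (Module.Basis.ofVectorSpaceIndex ℚ V) := linearOrderOfSTO WellOrderingRel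
  let f : V → Lex (Module.Basis.ofVectorSpaceIndex ℚ V →₀ ℚ) := fun v ↦ toLex (b.repr v)
  let _ : LinearOrder V := LinearOrder.lift' f (toLex.injective.comp b.repr.injective)
  exact ⟨inferInstance, Function.Injective.isOrderedAddMonoid f
    (fun v w ↦ congrArg toLex (map_add b.repr v w)) Iff.rfl⟩

theorem finrank_vectorSpan_add_two_mul_card_le {G V : Type*} [Mul G] [IsCancelMul G]
    [DecidableEq G] [AddCommGroup V] [Module ℚ V] {p : G → V}
    (hp : ∀ a b, p (a * b) = p a + p b) (A : Finset G) :
    (Module.finrank ℚ (vectorSpan ℚ (p '' A)) + 2) * A.card ≤ 2 * (A * A).card := by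
  obtain ⟨_, _⟩ := exists_linearOrder_isOrderedAddMonoid V
  exact finrank_vectorSpan_add_two_mul_card_le_of_linearOrder hp A

theorem finrank_span_le_finrank_vectorSpan_add_one (k : Type*) {V : Type*} [DivisionRing k]
    [AddCommGroup V] [Module k V] (s : Set V) :
    Module.finrank k (Submodule.span k s) ≤ Module.finrank k (vectorSpan k s) + 1 := by
  have h : vectorSpan k (insert 0 s) = Submodule.span k s := by
    simp [vectorSpan_eq_span_vsub_set_right k (Set.mem_insert (0 : V) s)]
  exact h ▸ finrank_vectorSpan_insert_le_set k s 0

section Rank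

variable {G : Type*} [CommGroup G] {V : Type*} [AddCommGroup V] [Module ℚ V]

/-- The subgroup `Γ` has rank at most `r`: some `r` elements of `Γ` generate a subgroup containing
a positive power of each element of `Γ`. -/
def HasRankLE (Γ : Subgroup G) (r : ℕ) : Prop :=
  ∃ g : Fin r → G, (∀ i, g i ∈ Γ) ∧
    ∀ x ∈ Γ, ∃ k : ℕ, 0 < k ∧ x ^ k ∈ Subgroup.closure (Set.range g)

theorem exists_nsmul_eq_map_of_mem_span (φ : Additive G →+ V) {S : Set G} {v : V}
    (hv : v ∈ Submodule.span ℚ ((fun u ↦ φ (.ofMul u)) '' S)) :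
    ∃ n : ℕ, 0 < n ∧ ∃ y ∈ Subgroup.closure S, n • v = φ (.ofMul y) := by
  induction hv using Submodule.span_induction with
  | mem v hv =>
    obtain ⟨y, hy, rfl⟩ := hv
    exact ⟨1, one_pos, y, Subgroup.subset_closure hy, one_smul _ _⟩
  | zero => exact ⟨1, one_pos, 1, one_mem _, by simp⟩
  | add v w _ _ hv hw =>
    obtain ⟨n, hn, y, hy, hny⟩ := hv
    obtain ⟨l, hl, z, hz, hlz⟩ := hw
    refine ⟨n * l, Nat.mul_pos hn hl, y ^ l * z ^ n, mul_mem (pow_mem hy _) (pow_mem hz _), ?_⟩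
    rw [ofMul_mul, ofMul_pow, ofMul_pow, map_add, map_nsmul, map_nsmul, ← hny, ← hlz, smul_add,
      smul_smul, smul_smul, mul_comm l n]
  | smul c v _ hv =>
    obtain ⟨n, hn, y, hy, hny⟩ := hv
    refine ⟨c.den * n, Nat.mul_pos c.den_pos hn, y ^ c.num, zpow_mem hy _, ?_⟩
    rw [ofMul_zpow, map_zsmul, ← hny, ← Nat.cast_smul_eq_nsmul ℚ, ← Int.cast_smul_eq_zsmul ℚ,
      ← Nat.cast_smul_eq_nsmul ℚ, smul_smul, smul_smul]
    congr 1
    push_cast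
    linear_combination (n : ℚ) * Rat.den_mul_eq_num c

theorem exists_pow_mem_closure_of_map_mem_span {φ : Additive G →+ V}
    (hφ : ∀ z : G, φ (.ofMul z) = 0 → IsOfFinOrder z) {S : Set G} {x : G}
    (hx : φ (.ofMul x) ∈ Submodule.span ℚ ((fun u ↦ φ (.ofMul u)) '' S)) :
    ∃ n : ℕ, 0 < n ∧ x ^ n ∈ Subgroup.closure S := by
  obtain ⟨n, hn, y, hy, hxy⟩ := exists_nsmul_eq_map_of_mem_span φ hx
  have hker : φ (.ofMul (x ^ n / y)) = 0 := by
    rw [ofMul_div, ofMul_pow, map_sub, map_nsmul, hxy, sub_self]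
  obtain ⟨l, hl, hpow⟩ := isOfFinOrder_iff_pow_eq_one.1 (hφ _ hker)
  rw [div_pow, div_eq_one, ← pow_mul] at hpow
  exact ⟨n * l, Nat.mul_pos hn hl, hpow ▸ pow_mem hy l⟩

theorem map_mem_span_of_mem_closure (φ : Additive G →+ V) {S : Set G} {x : G}
    (hx : x ∈ Subgroup.closure S) :
    φ (.ofMul x) ∈ Submodule.span ℚ ((fun u ↦ φ (.ofMul u)) '' S) := by
  induction hx using Subgroup.closure_induction with
  | mem x hx => exact Submodule.subset_span ⟨x, hx, rfl⟩
  | one => simp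
  | mul x y _ _ hx hy => simpa using add_mem hx hy
  | inv x _ hx => simpa using hx

theorem hasRankLE_closure_finrank_span {φ : Additive G →+ V}
    (hφ : ∀ z : G, φ (.ofMul z) = 0 → IsOfFinOrder z) {S : Set G} (hS : S.Finite) :
    HasRankLE (Subgroup.closure S)
      (Module.finrank ℚ (Submodule.span ℚ ((fun u ↦ φ (.ofMul u)) '' S))) := by
  have := FiniteDimensional.span_of_finite ℚ (hS.image fun u ↦ φ (.ofMul u))
  obtain ⟨b, hbS, hspan, -⟩ :=
    Submodule.exists_fun_fin_finrank_span_eq ℚ ((fun u ↦ φ (.ofMul u)) '' S)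
  choose g hgS hgb using hbS
  refine ⟨g, fun i ↦ Subgroup.subset_closure (hgS i), fun x hx ↦ ?_⟩
  apply exists_pow_mem_closure_of_map_mem_span hφ
  rw [← Set.range_comp, show (fun u ↦ φ (.ofMul u)) ∘ g = b from funext hgb, hspan]
  exact map_mem_span_of_mem_closure φ hx

theorem isOfFinOrder_of_one_tmul_eq_zero {z : G}
    (hz : TensorProduct.mk ℤ ℚ (Additive G) 1 (.ofMul z) = 0) : IsOfFinOrder z := by
  obtain ⟨n, hn⟩ := (IsLocalizedModule.eq_zero_iff (nonZeroDivisors ℤ) _).1 hz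
  exact isOfFinOrder_iff_zpow_eq_one.2 ⟨n, nonZeroDivisors.ne_zero n.2, hn⟩

theorem exists_hasRankLE_closure_of_finset [DecidableEq G] (A : Finset G) :
    ∃ s : ℕ, (s + 1) * A.card ≤ 2 * (A * A).card ∧ HasRankLE (Subgroup.closure (A : Set G)) s := by
  let φ : Additive G →+ TensorProduct ℤ ℚ (Additive G) :=
    (TensorProduct.mk ℤ ℚ (Additive G) 1).toAddMonoidHom
  refine ⟨_, le_trans ?_ (finrank_vectorSpan_add_two_mul_card_le
    (p := fun u ↦ φ (.ofMul u)) (fun a b ↦ map_add φ (.ofMul a) (.ofMul b)) A),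
    hasRankLE_closure_finrank_span (φ := φ)
      (fun _ ↦ isOfFinOrder_of_one_tmul_eq_zero) A.finite_toSet⟩
  gcongr ?_ * _
  exact Nat.succ_le_succ (finrank_span_le_finrank_vectorSpan_add_one ℚ _)

end Rank

theorem exists_finset_units_image_val_eq {M : Type*} [GroupWithZero M] [DecidableEq M]
    {A : Finset M} (h0 : (0 : M) ∉ A) : ∃ U : Finset Mˣ, U.image Units.val = A := by
  classical
  refine ⟨A.preimage Units.val Units.val_injective.injOn, ?_⟩
  rw [Finset.image_preimage, Finset.filter_true_of_mem]
  exact fun a ha ↦ ⟨Units.mk0 a (ne_of_mem_of_not_mem ha h0), rfl⟩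

theorem stmt17_general {M : Type*} [CommGroupWithZero M] [DecidableEq M] (A : Finset M)
    (h0 : (0 : M) ∉ A) (hA : A.Nonempty) (K : ℝ)
    (hAA : ((A * A).card : ℝ) ≤ K * (A.card : ℝ)) :
    ∃ s : ℕ, (s : ℝ) ≤ 2 * K - 1 ∧ HasRankLE (Subgroup.closure {u : Mˣ | (u : M) ∈ A}) s := by
  classical
  obtain ⟨U, rfl⟩ := exists_finset_units_image_val_eq h0
  have hUU : U.image Units.val * U.image Units.val = (U * U).image (Units.val (α := M)) :=
    (Finset.image_mul (Units.coeHom M)).symm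
  have hU : {u : Mˣ | (u : M) ∈ U.image Units.val} = U := by ext; simp [Units.val_inj]
  rw [hUU, Finset.card_image_of_injective _ Units.val_injective,
    Finset.card_image_of_injective _ Units.val_injective] at hAA
  obtain ⟨s, hs, hrank⟩ := exists_hasRankLE_closure_of_finset U
  refine ⟨s, ?_, hU ▸ hrank⟩
  have hUpos : (0 : ℝ) < U.card := mod_cast (Finset.image_nonempty.1 hA).card_pos
  have hs' : ((s : ℝ) + 1) * U.card ≤ 2 * (U * U).card := mod_cast hs
  have : (s : ℝ) + 1 ≤ 2 * K := le_of_mul_le_mul_right (by linarith) hUpos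
  linarith

theorem stmt17 (A : Finset ℂ) (h0 : (0 : ℂ) ∉ A) (h1 : (1 : ℂ) ∈ A)
    (K : ℝ) (hK : 1 ≤ K) (hAA : ((A * A).card : ℝ) ≤ K * (A.card : ℝ)) :
    ∃ s : ℕ, (s : ℝ) ≤ 16 * K ∧
      ∃ g : Fin s → ℂˣ,
        (∀ i, g i ∈ Subgroup.closure {u : ℂˣ | (u : ℂ) ∈ A}) ∧
        ∀ x ∈ Subgroup.closure {u : ℂˣ | (u : ℂ) ∈ A},
          ∃ k : ℕ, 0 < k ∧ x ^ k ∈ Subgroup.closure (Set.range g) := by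
  obtain ⟨s, hs, hrank⟩ := stmt17_general A h0 ⟨1, h1⟩ K hAA
  exact ⟨s, by linarith, hrank⟩
end
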